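/- arXiv:2106.02755 — 2 statements merged into one kernel-verified Lean document; each statement's English description precedes it below -/
import Mathlib

section
/- There is a universal constant C > 0 such that the following holds. Let μ be a Borel probability measure on ℝ^d supported in the closed ball of radius R centered at the origin, and let K(x,y) = ∫ cos(⟨ω, x−y⟩) dμ(ω). Then for every ε ∈ (0,1) there exists a polynomial kernel P of degree at most C·(R² + log(1/ε)) such that |K(x,y) − P(x,y)| ≤ ε for all x, y ∈ 𝔹^d. -/
open MeasureTheory
open scoped RealInnerProductSpace

/-- Multi-indices in `d` variables of total degree at most `n`. -/
abbrev MIdx (d n : ℕ) := {a : Fin d → Fin (n + 1) // ∑ i, (a i : ℕ) ≤ n}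

/-- The polynomial kernel `P(x,y) = Σ_{|α|≤n, |β|≤n} c_{αβ} x^α y^β` of degree at most `n`
on Euclidean space, determined by the coefficient matrix `c`. -/
noncomputable def polyKer {d n : ℕ} (c : MIdx d n → MIdx d n → ℝ)
    (x y : EuclideanSpace ℝ (Fin d)) : ℝ :=
  ∑ a : MIdx d n, ∑ b : MIdx d n,
    c a b * ((∏ i, x i ^ (a.1 i : ℕ)) * ∏ i, y i ^ (b.1 i : ℕ))

def IsPK (d n : ℕ) (f : EuclideanSpace ℝ (Fin d) → EuclideanSpace ℝ (Fin d) → ℝ) : Prop :=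
  ∃ c : MIdx d n → MIdx d n → ℝ, ∀ x y, f x y = polyKer c x y

lemma IsPK.sum {d n : ℕ} {ι : Type*} (s : Finset ι)
    (f : ι → EuclideanSpace ℝ (Fin d) → EuclideanSpace ℝ (Fin d) → ℝ)
    (h : ∀ i ∈ s, IsPK d n (f i)) : IsPK d n (fun x y => ∑ i ∈ s, f i x y) := by
  classical
  induction s using Finset.induction_on with
  | empty => exact ⟨fun _ _ => 0, fun x y => by simp [polyKer]⟩
  | insert i s hi ih =>
    obtain ⟨c, hc⟩ := ih (fun j hj => h j (Finset.mem_insert_of_mem hj))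
    obtain ⟨c', hc'⟩ := h i (Finset.mem_insert_self _ _)
    refine ⟨fun a b => c' a b + c a b, fun x y => ?_⟩
    beta_reduce at hc ⊢
    rw [Finset.sum_insert hi, hc', hc]
    simp only [polyKer, add_mul, Finset.sum_add_distrib]

lemma IsPK.smul {d n : ℕ} {f : EuclideanSpace ℝ (Fin d) → EuclideanSpace ℝ (Fin d) → ℝ}
    (h : IsPK d n f) (r : ℝ) : IsPK d n (fun x y => r * f x y) := by
  obtain ⟨c, hc⟩ := h
  refine ⟨fun a b => r * c a b, fun x y => ?_⟩
  simp only [hc, polyKer, Finset.mul_sum, mul_assoc]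

lemma IsPK.mono {d n : ℕ} (a b : MIdx d n) :
    IsPK d n (fun x y => (∏ i, x i ^ (a.1 i : ℕ)) * ∏ i, y i ^ (b.1 i : ℕ)) := by
  classical
  refine ⟨fun a' b' => if a' = a then if b' = b then 1 else 0 else 0, fun x y => ?_⟩
  unfold polyKer
  rw [Finset.sum_eq_single a, Finset.sum_eq_single b]
  · simp
  · intro b' _ hb; simp [hb]
  · simp
  · intro b' _ hb; simp [hb]
  · simp

lemma IsPK.mono' {d n : ℕ} (a b : Fin d → ℕ) (ha : ∑ i, a i ≤ n) (hb : ∑ i, b i ≤ n) :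
    IsPK d n (fun x y => (∏ i, x i ^ (a i)) * ∏ i, y i ^ (b i)) := by
  have ha' : ∀ i, a i < n + 1 := fun i =>
    Nat.lt_succ_of_le ((Finset.single_le_sum (fun _ _ => Nat.zero_le _) (Finset.mem_univ i)).trans ha)
  have hb' : ∀ i, b i < n + 1 := fun i =>
    Nat.lt_succ_of_le ((Finset.single_le_sum (fun _ _ => Nat.zero_le _) (Finset.mem_univ i)).trans hb)
  exact IsPK.mono (⟨fun i => ⟨a i, ha' i⟩, ha⟩ : MIdx d n) ⟨fun i => ⟨b i, hb' i⟩, hb⟩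

lemma IsPK.word {d n m : ℕ} (hm : m ≤ n) (p : Fin m → Fin d ⊕ Fin d) :
    IsPK d n (fun x y => ∏ i, Sum.elim (fun j => x j) (fun j => y j) (p i)) := by
  classical
  have hcard : ∑ j, (Finset.univ.filter (fun i => p i = j)).card = m := by
    rw [← Finset.card_eq_sum_card_fiberwise (fun _ _ => Finset.mem_coe.2 (Finset.mem_univ _))]
    simp
  rw [Fintype.sum_sum_type] at hcard
  obtain ⟨c, hc⟩ := IsPK.mono' (n := n)
    (fun j => (Finset.univ.filter (fun i => p i = Sum.inl j)).card)
    (fun j => (Finset.univ.filter (fun i => p i = Sum.inr j)).card) (by omega) (by omega)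
  refine ⟨c, fun x y => ?_⟩
  rw [← hc x y]
  beta_reduce
  rw [← Finset.prod_fiberwise (s := Finset.univ) (g := p), Fintype.prod_sum_type]
  congr 1
  all_goals
    refine Finset.prod_congr rfl fun j _ => ?_
    refine Finset.prod_eq_pow_card fun i hi => ?_
    rw [(Finset.mem_filter.1 hi).2]
    rfl

lemma inner_pow_eq {d m : ℕ} (ω x y : EuclideanSpace ℝ (Fin d)) :
    ⟪ω, x - y⟫ ^ m = ∑ p : Fin m → Fin d ⊕ Fin d,
      (∏ i, Sum.elim (fun j => ω j) (fun j => - ω j) (p i)) *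
       ∏ i, Sum.elim (fun j => x j) (fun j => y j) (p i) := by
  have : ⟪ω, x - y⟫ = ∑ j : Fin d ⊕ Fin d, Sum.elim (fun j => ω j) (fun j => - ω j) j *
      Sum.elim (fun j => x j) (fun j => y j) j := by
    rw [Fintype.sum_sum_type, ← Finset.sum_add_distrib]
    simp only [PiLp.inner_apply, Sum.elim_inl, Sum.elim_inr]
    refine Finset.sum_congr rfl fun j _ => ?_
    simp
    ring
  rw [this, Fintype.sum_pow]
  simp only [Finset.prod_mul_distrib]

lemma integrable_word {d m : ℕ} (μ : Measure (EuclideanSpace ℝ (Fin d))) [IsProbabilityMeasure μ]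
    (R : ℝ) (h : ∀ᵐ ω ∂μ, ‖ω‖ ≤ R) (p : Fin m → Fin d ⊕ Fin d) :
    Integrable (fun ω : EuclideanSpace ℝ (Fin d) =>
      ∏ i, Sum.elim (fun j => ω j) (fun j => - ω j) (p i)) μ := by
  refine Integrable.of_bound (C := R ^ m) (Continuous.aestronglyMeasurable ?_) ?_
  · refine continuous_finsetProd _ fun i _ => ?_
    rcases p i with j | j <;> simp only [Sum.elim_inl, Sum.elim_inr] <;> fun_prop
  · filter_upwards [h] with ω hω
    rw [norm_prod]
    calc _ ≤ ∏ i : Fin m, R := by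
          refine Finset.prod_le_prod (fun _ _ => norm_nonneg _) fun i _ => ?_
          rcases p i with j | j
          · simpa using (PiLp.norm_apply_le ω j).trans hω
          · simpa using (PiLp.norm_apply_le ω j).trans hω
      _ = R ^ m := by simp

lemma integrable_pow {d : ℕ} (m : ℕ) (μ : Measure (EuclideanSpace ℝ (Fin d))) [IsProbabilityMeasure μ]
    (R : ℝ) (h : ∀ᵐ ω ∂μ, ‖ω‖ ≤ R) (x y : EuclideanSpace ℝ (Fin d)) :
    Integrable (fun ω : EuclideanSpace ℝ (Fin d) => ⟪ω, x - y⟫ ^ m) μ := by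
  simp only [inner_pow_eq]
  exact integrable_finsetSum _ fun p _ => (integrable_word μ R h p).mul_const _

lemma IsPK.int_pow {d n m : ℕ} (hm : m ≤ n) (μ : Measure (EuclideanSpace ℝ (Fin d)))
    [IsProbabilityMeasure μ] (R : ℝ) (h : ∀ᵐ ω ∂μ, ‖ω‖ ≤ R) :
    IsPK d n (fun x y => ∫ ω, ⟪ω, x - y⟫ ^ m ∂μ) := by
  have : (fun x y : EuclideanSpace ℝ (Fin d) => ∫ ω, ⟪ω, x - y⟫ ^ m ∂μ) = fun x y =>
      ∑ p : Fin m → Fin d ⊕ Fin d,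
      (∫ ω : EuclideanSpace ℝ (Fin d), ∏ i, Sum.elim (fun j => ω j) (fun j => - ω j) (p i) ∂μ) *
       ∏ i, Sum.elim (fun j => x j) (fun j => y j) (p i) := by
    funext x y
    simp only [inner_pow_eq]
    rw [integral_finsetSum _ fun p _ => (integrable_word μ R h p).mul_const _]
    simp only [integral_mul_const]
  rw [this]
  exact IsPK.sum _ _ fun p _ => (IsPK.word hm p).smul _

lemma cos_taylor (N : ℕ) : ∃ a : ℕ → ℝ, ∀ t : ℝ, |t| / (N + 1) ≤ 1 / 2 →
    |Real.cos t - ∑ m ∈ Finset.range N, a m * t ^ m| ≤ |t| ^ N / N.factorial * 2 := by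
  refine ⟨fun m => (Complex.I ^ m / (m.factorial : ℂ)).re, fun t ht => ?_⟩
  have := Complex.exp_bound' (x := (t : ℂ) * Complex.I) (n := N) (by simpa using ht)
  have h2 := (Complex.abs_re_le_norm _).trans this
  simp only [norm_mul, Complex.norm_real, Complex.norm_I, mul_one, Complex.sub_re,
    Complex.exp_ofReal_mul_I_re, Complex.re_sum, Real.norm_eq_abs] at h2
  refine le_trans (le_of_eq ?_) h2
  congr 2
  refine Finset.sum_congr rfl fun m _ => ?_
  rw [← Complex.re_mul_ofReal]
  congr 1
  push_cast
  ring

lemma symm_it {d n : ℕ} {k f : EuclideanSpace ℝ (Fin d) → EuclideanSpace ℝ (Fin d) → ℝ} {ε : ℝ}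
    (hk : ∀ x y, k x y = k y x) (hf : IsPK d n f)
    (h : ∀ x y, ‖x‖ ≤ 1 → ‖y‖ ≤ 1 → |k x y - f x y| ≤ ε) :
    ∃ c : MIdx d n → MIdx d n → ℝ, (∀ a b, c a b = c b a) ∧
      ∀ x y : EuclideanSpace ℝ (Fin d), ‖x‖ ≤ 1 → ‖y‖ ≤ 1 → |k x y - polyKer c x y| ≤ ε := by
  obtain ⟨c, hc⟩ := hf
  refine ⟨fun a b => (c a b + c b a) / 2, fun a b => by ring, fun x y hx hy => ?_⟩
  have : polyKer (fun a b => (c a b + c b a) / 2) x y = (polyKer c x y + polyKer c y x) / 2 := by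
    have h2 : polyKer c y x = ∑ a : MIdx d n, ∑ b : MIdx d n,
      c b a * ((∏ i, x i ^ (a.1 i : ℕ)) * ∏ i, y i ^ (b.1 i : ℕ)) := by
      unfold polyKer
      rw [Finset.sum_comm]
      refine Finset.sum_congr rfl fun a _ => Finset.sum_congr rfl fun b _ => by ring
    rw [h2]
    unfold polyKer
    rw [← Finset.sum_add_distrib, Finset.sum_div]
    refine Finset.sum_congr rfl fun a _ => ?_
    rw [← Finset.sum_add_distrib, Finset.sum_div]
    refine Finset.sum_congr rfl fun b _ => by ring
  rw [this, ← hc, ← hc]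
  have h1 := abs_le.1 (h x y hx hy)
  have h2 := abs_le.1 (h y x hy hx)
  rw [hk y x] at h2
  rw [abs_le]
  constructor <;> linarith [h1.1, h1.2, h2.1, h2.2]

lemma fact_bound (R L : ℝ) (hR : 0 ≤ R) (N : ℕ) (hN : 6 * R + L + 1 ≤ N) (t : ℝ) (ht : |t| ≤ 2 * R) :
    |t| ^ N / N.factorial * 2 ≤ Real.exp (-L) := by
  have e1 := Real.exp_one_lt_d9
  have e2 := Real.exp_one_gt_d9
  have h := Real.pow_div_factorial_le_exp (|t| * Real.exp 1) (by positivity) N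
  rw [mul_pow, ← Real.exp_nat_mul, mul_one] at h
  have h3 : |t| * Real.exp 1 ≤ 6 * R := by nlinarith [abs_nonneg t]
  have h4 : |t| ^ N / N.factorial ≤ Real.exp (-L - 1) := by
    have : |t| ^ N / N.factorial * Real.exp N ≤ Real.exp (6 * R) := by
      refine le_trans (le_of_eq ?_) (h.trans (Real.exp_le_exp.2 h3))
      ring
    have h5 : Real.exp (6 * R) ≤ Real.exp (-L - 1) * Real.exp N := by
      rw [← Real.exp_add]; exact Real.exp_le_exp.2 (by linarith)
    exact le_of_mul_le_mul_right (this.trans h5) (Real.exp_pos _)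
  have h6 : Real.exp (-L) = Real.exp (-L - 1) * Real.exp 1 := by rw [← Real.exp_add]; ring_nf
  rw [h6]
  nlinarith [Real.exp_pos (-L - 1)]

theorem stmt_12 :
    ∃ C : ℝ, 0 < C ∧
      ∀ (d : ℕ) (μ : Measure (EuclideanSpace ℝ (Fin d))), IsProbabilityMeasure μ →
        ∀ R : ℝ, 0 ≤ R → (∀ᵐ ω ∂μ, ‖ω‖ ≤ R) →
          ∀ ε : ℝ, 0 < ε → ε < 1 →
            ∃ n : ℕ, (n : ℝ) ≤ C * (R ^ 2 + Real.log (1 / ε)) ∧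
              ∃ c : MIdx d n → MIdx d n → ℝ, (∀ a b, c a b = c b a) ∧
                ∀ x y : EuclideanSpace ℝ (Fin d), ‖x‖ ≤ 1 → ‖y‖ ≤ 1 →
                  |(∫ ω, Real.cos ⟪ω, x - y⟫ ∂μ) - polyKer c x y| ≤ ε := by
  refine ⟨23, by norm_num, ?_⟩
  intro d μ hμ R hR hsupp ε hε hε1
  set L := Real.log (1 / ε) with hL
  have hL0 : 0 < L := Real.log_pos (by rw [lt_div_iff₀ hε]; linarith)
  have hLe : Real.exp (-L) = ε := by
    rw [hL, one_div, Real.log_inv, neg_neg, Real.exp_log hε]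
  have hsym : ∀ x y : EuclideanSpace ℝ (Fin d),
      (∫ ω, Real.cos ⟪ω, x - y⟫ ∂μ) = ∫ ω, Real.cos ⟪ω, y - x⟫ ∂μ := by
    intro x y
    congr 1; funext ω
    rw [← neg_sub y x, inner_neg_right, Real.cos_neg]
  have hcosint : ∀ z : EuclideanSpace ℝ (Fin d), Integrable (fun ω => Real.cos ⟪ω, z⟫) μ := by
    intro z
    refine Integrable.of_bound (C := 1) (Continuous.aestronglyMeasurable (by fun_prop)) ?_
    exact Filter.Eventually.of_forall fun ω => Real.abs_cos_le_one _
  have hin : ∀ x y ω : EuclideanSpace ℝ (Fin d), ‖x‖ ≤ 1 → ‖y‖ ≤ 1 → ‖ω‖ ≤ R →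
      |⟪ω, x - y⟫| ≤ 2 * R := by
    intro x y ω hx hy hω
    have h1 := abs_real_inner_le_norm ω (x - y)
    have h2 := norm_sub_le x y
    nlinarith [norm_nonneg ω, norm_nonneg (x - y)]
  -- reduction to a pointwise approximation
  have key : ∀ (n N : ℕ) (hNn : N ≤ n + 1) (a : ℕ → ℝ),
      (∀ t : ℝ, |t| ≤ 2 * R → |Real.cos t - ∑ m ∈ Finset.range N, a m * t ^ m| ≤ ε) →
      ∃ c : MIdx d n → MIdx d n → ℝ, (∀ a b, c a b = c b a) ∧
                ∀ x y : EuclideanSpace ℝ (Fin d), ‖x‖ ≤ 1 → ‖y‖ ≤ 1 →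
                  |(∫ ω, Real.cos ⟪ω, x - y⟫ ∂μ) - polyKer c x y| ≤ ε := by
    intro n N hNn a ha
    refine symm_it (k := fun x y => ∫ ω, Real.cos ⟪ω, x - y⟫ ∂μ) hsym
      (IsPK.sum (Finset.range N) (fun m x y => a m * ∫ ω, ⟪ω, x - y⟫ ^ m ∂μ) fun m hm =>
        (IsPK.int_pow (n := n) (m := m) (by have := Finset.mem_range.1 hm; omega) μ R hsupp).smul _) ?_
    intro x y hx hy
    simp only [← integral_const_mul]
    rw [← integral_finsetSum _ fun m _ => (integrable_pow m μ R hsupp x y).const_mul _,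
      ← integral_sub (hcosint _) (integrable_finsetSum _ fun m _ =>
        (integrable_pow m μ R hsupp x y).const_mul _)]
    have := norm_integral_le_of_norm_le_const (μ := μ) (C := ε)
      (f := fun ω => Real.cos ⟪ω, x - y⟫ - ∑ m ∈ Finset.range N, a m * ⟪ω, x - y⟫ ^ m) (by
        filter_upwards [hsupp] with ω hω
        exact ha _ (hin x y ω hx hy hω))
    simpa using this
  by_cases hS : R ^ 2 + L < 1 / 4
  · refine ⟨0, by simp only [Nat.cast_zero]; positivity, key 0 1 (by norm_num) (fun _ => 1) ?_⟩
    intro t ht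
    have h1 := Real.one_sub_sq_div_two_le_cos (x := t)
    have h2 := Real.cos_le_one t
    have h3 : t ^ 2 ≤ (2 * R) ^ 2 := sq_le_sq' (by linarith [abs_le.1 ht]) (abs_le.1 ht).2
    have h4 : 1 - L ≤ ε := by rw [← hLe]; linarith [Real.add_one_le_exp (-L)]
    simp only [Finset.sum_range_one, pow_zero, mul_one]
    rw [abs_le]
    constructor <;> nlinarith [sq_nonneg R]
  · push Not at hS
    have hN := Nat.ceil_lt_add_one (show 0 ≤ 6 * R + L + 1 by positivity)
    have hN' := Nat.le_ceil (6 * R + L + 1)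
    set N := ⌈6 * R + L + 1⌉₊ with hNdef
    refine ⟨N, ?_, ?_⟩
    · nlinarith [sq_nonneg (R - 1)]
    · obtain ⟨a, ha⟩ := cos_taylor N
      refine key N N (by omega) a fun t ht => ?_
      refine (ha t ?_).trans ((fact_bound R L hR N hN' t ht).trans hLe.le)
      rw [div_le_iff₀ (by positivity)]
      linarith
end

section
/- Let d ≥ 1 and n ∈ ℕ, and let V = {x ∈ ℝ^d : ‖x‖² = 1} be the unit sphere. Then HF_V(n) = C(n + d − 1, d − 1) + C(n + d − 2, d − 1), where C(·,·) denotes the binomial coefficient (with the convention C(d−2, d−1) = 0 when n = 0). -/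
/-- The linear map sending a real polynomial in `d` variables to its restriction
(as a function) to a subset `V` of `ℝ^d` (with the Euclidean structure). -/
noncomputable def restrictEval {d : ℕ} (V : Set (EuclideanSpace ℝ (Fin d))) :
    MvPolynomial (Fin d) ℝ →ₗ[ℝ] (↥V → ℝ) where
  toFun p := fun x => MvPolynomial.eval (fun i => (x : EuclideanSpace ℝ (Fin d)) i) p
  map_add' p q := by funext x; simp
  map_smul' c p := by funext x; simp [MvPolynomial.smul_eval]

/-- The Hilbert function of `V ⊆ ℝ^d`: the dimension of the space of functions `V → ℝ`
arising as restrictions to `V` of polynomials of total degree at most `n`. -/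
noncomputable def HF {d : ℕ} (V : Set (EuclideanSpace ℝ (Fin d))) (n : ℕ) : ℕ :=
  Module.finrank ℝ ↥((MvPolynomial.restrictTotalDegree (Fin d) ℝ n).map (restrictEval V))

open MvPolynomial in
theorem sphHF_psi_apply {m : ℕ} (V : Set (EuclideanSpace ℝ (Fin (m+1)))) (p : MvPolynomial (Fin (m+1)) ℝ)
    (x : V) : restrictEval V p x = MvPolynomial.eval (fun i => (x : EuclideanSpace ℝ (Fin (m+1))) i) p := rfl

/-- exponents of total degree at most `n` versus weak compositions -/
noncomputable def sphHF_equiv (m n : ℕ) :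
    {s : Fin m →₀ ℕ | (s.sum fun _ e => e) ≤ n} ≃ {P : Fin (m+1) → ℕ // ∑ i, P i = n} where
  toFun s := ⟨Fin.cons (n - ∑ i, s.1 i) (fun i => s.1 i), by
    have h := s.2
    simp only [Set.mem_ofPred_eq] at h
    rw [Finsupp.sum_fintype _ _ (fun _ => rfl)] at h
    rw [Fin.sum_univ_succ]
    simp only [Fin.cons_zero, Fin.cons_succ]
    omega⟩
  invFun P := ⟨Finsupp.equivFunOnFinite.symm (Fin.tail P.1), by
    have h := P.2
    rw [Fin.sum_univ_succ] at h
    simp only [Set.mem_ofPred_eq]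
    rw [Finsupp.sum_fintype _ _ (fun _ => rfl)]
    simp only [Finsupp.coe_equivFunOnFinite_symm, Fin.tail]
    omega⟩
  left_inv s := by
    ext i
    simp [Fin.tail]
  right_inv P := by
    have h := P.2
    rw [Fin.sum_univ_succ] at h
    ext i
    refine Fin.cases ?_ (fun j => ?_) i
    · simp only [Finsupp.coe_equivFunOnFinite_symm, Fin.tail, Fin.cons_zero]
      omega
    · simp [Fin.tail]

theorem sphHF_finrank (m n : ℕ) :
    Module.finrank ℝ (MvPolynomial.restrictTotalDegree (Fin m) ℝ n) = Nat.choose (n + m) m := by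
  have b := MvPolynomial.basisRestrictSupport ℝ {s : Fin m →₀ ℕ | (s.sum fun _ e => e) ≤ n}
  have h := Module.finrank_eq_nat_card_basis b
  refine h.trans ?_
  rw [Nat.card_congr ((sphHF_equiv m n).trans (Sym.equivNatSumOfFintype (Fin (m+1)) n).symm),
    Nat.card_eq_fintype_card, Sym.card_sym_eq_choose, Fintype.card_fin]
  rw [show m + 1 + n - 1 = n + m by omega]
  exact Nat.choose_symm_add

/-- The second summand. -/
noncomputable def sphHF_B (m n : ℕ) : Submodule ℝ (MvPolynomial (Fin m) ℝ) :=
  if n = 0 then ⊥ else MvPolynomial.restrictTotalDegree (Fin m) ℝ (n - 1)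

theorem sphHF_B_zero (m : ℕ) : sphHF_B m 0 = ⊥ := by simp [sphHF_B]

theorem sphHF_B_pos (m n : ℕ) (h : n ≠ 0) :
    sphHF_B m n = MvPolynomial.restrictTotalDegree (Fin m) ℝ (n - 1) := by simp [sphHF_B, h]

theorem sphHF_finrank_B (m n : ℕ) :
    Module.finrank ℝ (sphHF_B m n) = if n = 0 then 0 else Nat.choose (n - 1 + m) m := by
  split_ifs with h
  · subst h
    rw [sphHF_B_zero]; exact finrank_bot _ _
  · rw [sphHF_B_pos _ _ h]; exact sphHF_finrank _ _

theorem sphHF_finite_B (m n : ℕ) : Module.Finite ℝ (sphHF_B m n) := by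
  by_cases h : n = 0
  · subst h
    rw [sphHF_B_zero]; infer_instance
  · rw [sphHF_B_pos _ _ h]; infer_instance

/-- product of submodules as a product of modules -/
def sphHF_prodEquiv {M N : Type*} [AddCommGroup M] [Module ℝ M] [AddCommGroup N] [Module ℝ N]
    (A : Submodule ℝ M) (B : Submodule ℝ N) : (A.prod B) ≃ₗ[ℝ] A × B where
  toFun x := (⟨x.1.1, x.2.1⟩, ⟨x.1.2, x.2.2⟩)
  invFun y := ⟨(y.1.1, y.2.1), ⟨y.1.2, y.2.2⟩⟩
  map_add' _ _ := rfl
  map_smul' _ _ := rfl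
  left_inv _ := rfl
  right_inv _ := rfl

open MvPolynomial in
/-- `(p, q) ↦ p(y) + x₀ q(y)` -/
noncomputable def sphHF_L (m : ℕ) :
    (MvPolynomial (Fin m) ℝ × MvPolynomial (Fin m) ℝ) →ₗ[ℝ] MvPolynomial (Fin (m+1)) ℝ :=
  (rename Fin.succ).toLinearMap.coprod
    ((LinearMap.mulLeft ℝ (X 0)) ∘ₗ (rename Fin.succ).toLinearMap)

open MvPolynomial in
theorem sphHF_eval_L {m : ℕ} (p q : MvPolynomial (Fin m) ℝ) (x : Fin (m+1) → ℝ) :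
    eval x (sphHF_L m (p, q)) =
      eval (fun i => x i.succ) p + x 0 * eval (fun i => x i.succ) q := by
  simp [sphHF_L, eval_rename, Function.comp_def]

theorem sphHF_mem {m : ℕ} (x : EuclideanSpace ℝ (Fin (m+1))) :
    ‖x‖ ^ 2 = 1 ↔ x 0 ^ 2 + ∑ i : Fin m, x i.succ ^ 2 = 1 := by
  rw [EuclideanSpace.real_norm_sq_eq, Fin.sum_univ_succ]

open MvPolynomial in
theorem sphHF_inj (m : ℕ) : Function.Injective
    ((restrictEval {x : EuclideanSpace ℝ (Fin (m+1)) | ‖x‖ ^ 2 = 1}) ∘ₗ sphHF_L m) := by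
  rw [injective_iff_map_eq_zero]
  rintro ⟨p, q⟩ h
  have key : ∀ y : Fin m → ℝ, y ∈ Set.pi Set.univ (fun _ => Set.Ioo (0:ℝ) (1/(m+1))) →
      eval y p = 0 ∧ eval y q = 0 := by
    intro y hy
    have hs : ∑ i, y i ^ 2 < 1 := by
      have hm : (0:ℝ) < m + 1 := by positivity
      have h1 : ∀ i ∈ Finset.univ, y i ^ 2 ≤ 1/((m:ℝ)+1) := by
        intro i _
        have ⟨h0, h1⟩ := hy i trivial
        have h2 : 1/((m:ℝ)+1) ≤ 1 := by rw [div_le_one hm]; simp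
        nlinarith
      have h2 := Finset.sum_le_sum h1
      simp only [Finset.sum_const, Finset.card_univ, Fintype.card_fin, nsmul_eq_mul] at h2
      refine h2.trans_lt ?_
      rw [mul_one_div, div_lt_one hm]
      simp
    set r := Real.sqrt (1 - ∑ i, y i ^ 2) with hr
    have hr0 : 0 < r := Real.sqrt_pos.2 (by linarith)
    have hr2 : r ^ 2 = 1 - ∑ i, y i ^ 2 := Real.sq_sqrt (by linarith)
    have gen : ∀ t : ℝ, t ^ 2 = r ^ 2 → eval y p + t * eval y q = 0 := by
      intro t ht
      have hx : (WithLp.toLp 2 (Fin.cons t y : Fin (m+1) → ℝ) : EuclideanSpace ℝ (Fin (m+1))) ∈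
          {x : EuclideanSpace ℝ (Fin (m+1)) | ‖x‖ ^ 2 = 1} := by
        rw [Set.mem_ofPred_eq, sphHF_mem]
        simp only [Fin.cons_zero, Fin.cons_succ]
        linarith
      have h3 := congrFun h ⟨_, hx⟩
      rw [LinearMap.comp_apply, sphHF_psi_apply, sphHF_eval_L] at h3
      simpa using h3
    have e1 := gen r rfl
    have e2 := gen (-r) (by ring)
    have e3 : r * eval y q = 0 := by linarith
    refine ⟨by linarith, ?_⟩
    exact (mul_eq_zero.1 e3).resolve_left hr0.ne'
  have hinf : ∀ _ : Fin m, (Set.Ioo (0:ℝ) (1/(m+1))).Infinite := fun _ =>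
    Set.Ioo_infinite (by positivity)
  have hp : p = 0 := funext_set _ hinf (fun y hy => by simpa using (key y hy).1)
  have hq : q = 0 := funext_set _ hinf (fun y hy => by simpa using (key y hy).2)
  rw [hp, hq]; rfl

open MvPolynomial in
theorem sphHF_range (m n : ℕ) :
    (restrictTotalDegree (Fin (m+1)) ℝ n).map
      (restrictEval {x : EuclideanSpace ℝ (Fin (m+1)) | ‖x‖ ^ 2 = 1}) =
    ((restrictTotalDegree (Fin m) ℝ n).prod (sphHF_B m n)).map
      ((restrictEval {x : EuclideanSpace ℝ (Fin (m+1)) | ‖x‖ ^ 2 = 1}) ∘ₗ sphHF_L m) := by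
  apply le_antisymm
  · conv_lhs => rw [restrictTotalDegree, restrictSupport_eq_span]
    rw [Submodule.map_span_le]
    rintro _ ⟨s, hs, rfl⟩
    simp only [Set.mem_ofPred_eq] at hs
    rw [Finsupp.sum_fintype _ _ (fun _ => rfl), Fin.sum_univ_succ] at hs
    set u : MvPolynomial (Fin m) ℝ := (1 - ∑ i, X i ^ 2) ^ (s 0 / 2) * monomial (Finsupp.tail s) 1
      with hu
    have hud : u.totalDegree + s 0 % 2 ≤ n := by
      have h1 : (1 - ∑ i, X i ^ 2 : MvPolynomial (Fin m) ℝ).totalDegree ≤ 2 := by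
        refine (totalDegree_sub _ _).trans (max_le (by simp) ?_)
        refine totalDegree_finsetSum_le fun i _ => ?_
        simp
      have h2 := totalDegree_mul ((1 - ∑ i, X i ^ 2 : MvPolynomial (Fin m) ℝ) ^ (s 0 / 2))
        (monomial (Finsupp.tail s) 1)
      have h3 := totalDegree_pow (1 - ∑ i, X i ^ 2 : MvPolynomial (Fin m) ℝ) (s 0 / 2)
      have h4 := Nat.mul_le_mul_left (s 0 / 2) h1
      have h5 : (monomial (Finsupp.tail s) (1:ℝ)).totalDegree = ∑ i : Fin m, s i.succ := by
        rw [totalDegree_monomial _ one_ne_zero, Finsupp.sum_fintype _ _ (fun _ => rfl)]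
        simp [Finsupp.tail_apply]
      rw [← hu, h5] at h2
      omega
    have hev : ∀ x : EuclideanSpace ℝ (Fin (m+1)), ‖x‖ ^ 2 = 1 →
        eval (fun i => x i) (monomial s (1:ℝ)) =
          (x 0) ^ (s 0 % 2) * eval (fun i : Fin m => x i.succ) u := by
      intro x hx
      rw [sphHF_mem] at hx
      rw [hu, eval_monomial, map_mul, eval_monomial, Finsupp.prod_fintype _ _ (fun _ => pow_zero _),
        Finsupp.prod_fintype _ _ (fun _ => pow_zero _), Fin.prod_univ_succ]
      simp only [map_pow, map_sub, map_one, map_sum, eval_X, Finsupp.tail_apply]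
      have : 1 - ∑ i : Fin m, x i.succ ^ 2 = x 0 ^ 2 := by linarith
      rw [this, ← pow_mul]
      conv_lhs => rw [← Nat.div_add_mod (s 0) 2, pow_add]
      ring
    rcases Nat.mod_two_eq_zero_or_one (s 0) with h0 | h0
    · rw [h0] at hud hev
      refine ⟨(u, 0), ⟨(mem_restrictTotalDegree _ _ _).2 (by simpa using hud), Submodule.zero_mem _⟩, ?_⟩
      funext x
      rw [LinearMap.comp_apply, sphHF_psi_apply, sphHF_psi_apply, sphHF_eval_L, hev x.1 x.2]
      simp
    · rw [h0] at hud hev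
      refine ⟨(0, u), ⟨Submodule.zero_mem _, ?_⟩, ?_⟩
      · have hn : n ≠ 0 := by omega
        simp only [sphHF_B, if_neg hn]
        exact (mem_restrictTotalDegree _ _ _).2 (by omega)
      funext x
      rw [LinearMap.comp_apply, sphHF_psi_apply, sphHF_psi_apply, sphHF_eval_L, hev x.1 x.2]
      simp
  · rw [Submodule.map_comp]
    apply Submodule.map_mono
    rw [Submodule.map_le_iff_le_comap]
    rintro ⟨p, q⟩ ⟨hp, hq⟩
    have hp := (mem_restrictTotalDegree _ _ _).1 hp
    rw [Submodule.mem_comap]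
    have : sphHF_L m (p, q) = rename Fin.succ p + X 0 * rename Fin.succ q := by simp [sphHF_L]
    rw [this]
    refine Submodule.add_mem _ ((mem_restrictTotalDegree _ _ _).2
      ((totalDegree_rename_le _ _).trans hp)) ?_
    rw [mem_restrictTotalDegree]
    simp only [sphHF_B] at hq
    split_ifs at hq with hn
    · have : q = 0 := by simpa using hq
      simp [this]
    · have hq := (mem_restrictTotalDegree _ _ _).1 hq
      have h1 := totalDegree_mul (X 0 : MvPolynomial (Fin (m+1)) ℝ) (rename Fin.succ q)
      have h2 := totalDegree_rename_le Fin.succ q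
      rw [totalDegree_X] at h1
      omega

theorem stmt_18 (d n : ℕ) (hd : 1 ≤ d) :
    HF {x : EuclideanSpace ℝ (Fin d) | ‖x‖ ^ 2 = 1} n =
      Nat.choose (n + d - 1) (d - 1) +
        (if n = 0 then 0 else Nat.choose (n + d - 2) (d - 1)) := by
  obtain ⟨m, rfl⟩ : ∃ m, d = m + 1 := ⟨d - 1, by omega⟩
  unfold HF
  haveI := sphHF_finite_B m n
  rw [sphHF_range, ← (Submodule.equivMapOfInjective _ (sphHF_inj m) _).finrank_eq,
    (sphHF_prodEquiv _ _).finrank_eq, Module.finrank_prod, sphHF_finrank, sphHF_finrank_B]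
  congr 1
  split_ifs with h
  · rfl
  · congr 1; omega
end
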